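/- arXiv:1408.0909 — 6 statements merged into one kernel-verified Lean document; each statement's English description precedes it below -/
import Mathlib

section
/- For each positive integer k there exists a constant n_k such that for all n ≥ n_k, the set A(n) contains an arithmetic progression of length k; equivalently, f(n) tends to infinity as n → ∞. -/
/-!
Fix the common difference `q = k!`. For a single prime `p` and any `m` prime to `p`, one of the
`k + 1` numbers `r + m * t` with `t ≤ k` starts a progression of length `k` avoiding the multiples
of `p` (`exists_shift`): if `p ≤ k` all terms agree modulo `p`; if `p > k` each index `i < k` excludes
at most one `t`. By the Chinese remainder theorem every `m > 0` therefore has a starting point `r < m`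
whose progression is coprime to `m` (`exists_start`).

A large `n` has a large exact prime power factor, since otherwise `n ∣ B!` for a fixed `B`.
Write `n = p ^ e * m` with `p ∤ m` and `p ^ e` large, take `r < m` good for `m`, and replace it by
`r + m * t` with `t ≤ k` good for `p`. The progression is coprime to `n`, and it stays below `n`
because `p ^ e` exceeds `k * q + k + 1`.
-/

/-- `inA n a` : `a` belongs to the least reduced residue system modulo `n`,
i.e. `0 < a < n` and `gcd(a, n) = 1`. -/
def inA (n a : ℕ) : Prop := 0 < a ∧ a < n ∧ Nat.gcd a n = 1

/-- `hasAP n s` : `A(n)` contains an arithmetic progression of length `s`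
(with some common difference `q ≥ 1`).  Thus `f(n) ≥ s ↔ hasAP n s`. -/
def hasAP (n s : ℕ) : Prop := ∃ a q : ℕ, 1 ≤ q ∧ ∀ i < s, inA n (a + i * q)

lemma exists_shift (k : ℕ) (hk : 0 < k) (p m r : ℕ) (hp : p.Prime) (hm : ¬ p ∣ m) :
    ∃ t ≤ k, ∀ i < k, ¬ p ∣ r + m * t + i * k.factorial := by
  rcases le_or_gt p k with h | h
  · have hq : ∀ i, p ∣ i * k.factorial := fun i =>
      ((Nat.Prime.dvd_factorial hp).2 h).mul_left i
    by_cases hr : p ∣ r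
    · refine ⟨1, hk, fun i _ hd => hm ?_⟩
      have h1 := (Nat.dvd_add_left (hq i)).1 hd
      rw [mul_one] at h1
      exact (Nat.dvd_add_right hr).1 h1
    · refine ⟨0, hk.le, fun i _ hd => hr ?_⟩
      simpa using (Nat.dvd_add_left (hq i)).1 hd
  · by_contra! hcon
    choose! f hf hd using hcon
    obtain ⟨x, hx, y, hy, hxy, hfe⟩ := Finset.exists_ne_map_eq_of_card_lt_of_maps_to
      (s := Finset.range (k + 1)) (t := Finset.range k) (f := f) (by simp)
      (fun t ht => by
        simp only [Finset.coe_range, Set.mem_Iio] at ht ⊢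
        exact hf t (by omega))
    simp only [Finset.mem_range] at hx hy
    have h1 := hd x (by omega)
    have h2 := hd y (by omega)
    rw [hfe] at h1
    have h3 : r + m * x + f y * k.factorial ≡ r + m * y + f y * k.factorial [MOD p] :=
      ((Nat.modEq_zero_iff_dvd).2 h1).trans ((Nat.modEq_zero_iff_dvd).2 h2).symm
    have h4 := Nat.ModEq.add_left_cancel' r (Nat.ModEq.add_right_cancel' _ h3)
    have h5 := Nat.ModEq.cancel_left_of_coprime ((Nat.Prime.coprime_iff_not_dvd hp).2 hm) h4
    exact hxy (h5.eq_of_lt_of_lt (by omega) (by omega))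

lemma exists_start (k : ℕ) (hk : 0 < k) (m : ℕ) (hm : 0 < m) :
    ∃ r < m, ∀ i < k, Nat.Coprime (r + i * k.factorial) m := by
  suffices h : ∃ r, ∀ i < k, Nat.Coprime (r + i * k.factorial) m by
    obtain ⟨r, hr⟩ := h
    refine ⟨r % m, Nat.mod_lt _ hm, fun i hi => ?_⟩
    have h1 : r % m + i * k.factorial ≡ r + i * k.factorial [MOD m] :=
      (Nat.mod_modEq r m).add_right _
    exact h1.gcd_eq.trans (hr i hi)
  induction m using Nat.recOnPrimeCoprime with
  | zero => omega
  | prime_pow p n hp =>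
    obtain ⟨t, -, ht⟩ := exists_shift k hk p 1 0 hp hp.not_dvd_one
    refine ⟨0 + 1 * t, fun i hi => Nat.Coprime.pow_right _ ?_⟩
    exact ((Nat.Prime.coprime_iff_not_dvd hp).2 (ht i hi)).symm
  | coprime a b ha hb hab iha ihb =>
    obtain ⟨r, hr⟩ := iha (by omega)
    obtain ⟨s, hs⟩ := ihb (by omega)
    obtain ⟨z, hza, hzb⟩ := Nat.chineseRemainder hab r s
    refine ⟨z, fun i hi => Nat.Coprime.mul_right ?_ ?_⟩
    · exact ((hza.add_right _).gcd_eq).trans (hr i hi)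
    · exact ((hzb.add_right _).gcd_eq).trans (hs i hi)

lemma exists_large_primePow (B n : ℕ) (hn : B.factorial < n) :
    ∃ p e m : ℕ, p.Prime ∧ n = p ^ e * m ∧ ¬ p ∣ m ∧ B < p ^ e := by
  have hnd : ¬ n ∣ B.factorial := fun h =>
    absurd (Nat.le_of_dvd (Nat.factorial_pos B) h) (by omega)
  rw [Nat.dvd_iff_prime_pow_dvd_dvd] at hnd
  push Not at hnd
  obtain ⟨p, j, hp, hjn, hjB⟩ := hnd
  obtain ⟨e, m, hpm, hnm⟩ := Nat.exists_eq_pow_mul_and_not_dvd (n := n) (by omega) p hp.ne_one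
  refine ⟨p, e, m, hp, hnm, hpm, ?_⟩
  have hB : B < p ^ j := by
    by_contra! h
    exact hjB (Nat.dvd_factorial (pow_pos hp.pos _) h)
  rw [hnm] at hjn
  have hcop : Nat.Coprime (p ^ j) m :=
    Nat.Coprime.pow_left _ ((Nat.Prime.coprime_iff_not_dvd hp).2 hpm)
  exact hB.trans_le (Nat.le_of_dvd (pow_pos hp.pos _) (hcop.dvd_of_dvd_mul_right hjn))

/-- For each positive integer `k` there is a constant `N` such that `A(n)`
contains an arithmetic progression of length `k` for all `n ≥ N`. -/
theorem stmt_1 : ∀ k : ℕ, 0 < k → ∃ N : ℕ, ∀ n : ℕ, N ≤ n → hasAP n k := by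
  intro k hk
  refine ⟨(k * k.factorial + k + 1).factorial + 1, fun n hn => ?_⟩
  obtain ⟨p, e, m, hp, hnm, hpm, hB⟩ := exists_large_primePow _ n (Nat.lt_of_succ_le hn)
  have hn1 : 1 < n := by
    have := Nat.factorial_pos (k * k.factorial + k + 1)
    omega
  have hm : 0 < m := Nat.pos_of_ne_zero (by rintro rfl; simp at hpm)
  obtain ⟨r, hrm, hr⟩ := exists_start k hk m hm
  obtain ⟨t, htk, ht⟩ := exists_shift k hk p m r hp hpm
  refine ⟨r + m * t, k.factorial, Nat.factorial_pos k, fun i hi => ?_⟩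
  have hcop : Nat.gcd (r + m * t + i * k.factorial) n = 1 := by
    rw [hnm]
    refine Nat.Coprime.mul_right
      (Nat.Coprime.pow_right _ ((Nat.Prime.coprime_iff_not_dvd hp).2 (ht i hi)).symm) ?_
    have h1 : r + m * t + i * k.factorial = r + i * k.factorial + m * t := by ring
    rw [h1]
    exact (Nat.coprime_add_mul_left_left _ _ _).2 (hr i hi)
  refine ⟨?_, ?_, hcop⟩
  · rcases Nat.eq_zero_or_pos (r + m * t + i * k.factorial) with h0 | h0
    · rw [h0, Nat.gcd_zero_left] at hcop
      omega
    · exact h0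
  · have h1 : i * k.factorial ≤ k * k.factorial := Nat.mul_le_mul_right _ hi.le
    have h2 : m * t ≤ m * k := Nat.mul_le_mul_left _ htk
    have h3 : m * (k * k.factorial + k + 1) ≤ m * p ^ e := Nat.mul_le_mul_left _ hB.le
    have h4 : k * k.factorial ≤ m * (k * k.factorial) := Nat.le_mul_of_pos_left _ hm
    rw [hnm, mul_comm (p ^ e)]
    rw [mul_add, mul_add, mul_one] at h3
    omega
end

section
/- For every positive integer k, setting P_{2k} to be the product of all primes not exceeding 2k and n_k = k · P_{2k}, every integer n ≥ n_k satisfies f(n) ≥ k; that is, A(n) contains an arithmetic progression of length k. -/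
lemma hasAP_of_large_prime {k n p : ℕ} (hk : 0 < k) (hn : 0 < n) (hp : p.Prime) (hpn : p ∣ n)
    (hpk : 2 * k < p) : hasAP n k := by
  obtain ⟨m, rfl⟩ := hpn
  have hm : 0 < m := Nat.pos_of_mul_pos_left hn
  -- The bound `i + 2 ≤ p` makes `1 + i * m < p * m` hold even when `m = 1`.
  have key : ∀ i, i + 2 ≤ p → ¬ p ∣ 1 + i * m → inA (p * m) (1 + i * m) := by
    intro i hi hd
    refine ⟨by omega, by nlinarith, ?_⟩
    refine Nat.Coprime.mul_right ((Nat.Prime.coprime_iff_not_dvd hp).2 hd).symm ?_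
    simp
  by_cases h : ∀ i < k, ¬ p ∣ 1 + i * m
  · exact ⟨1, m, hm, fun i hi => key i (by omega) (h i hi)⟩
  · push Not at h
    obtain ⟨j, hj, hd⟩ := h
    refine ⟨1 + (j + 1) * m, m, hm, fun i hi => ?_⟩
    have e : 1 + (j + 1) * m + i * m = 1 + (j + 1 + i) * m := by ring
    rw [e]
    refine key _ (by omega) fun h2 => ?_
    have e2 : 1 + (j + 1 + i) * m = (1 + j * m) + (i + 1) * m := by ring
    rw [e2, Nat.dvd_add_right hd] at h2
    rcases hp.dvd_mul.1 h2 with h3 | h3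
    · have := Nat.le_of_dvd (by omega) h3
      omega
    · rw [Nat.dvd_add_left (h3.mul_left j)] at hd
      exact hp.one_lt.ne' (Nat.dvd_one.1 hd)

/-- With `P₂ₖ` the product of all primes not exceeding `2k` and `n_k = k * P₂ₖ`,
every `n ≥ n_k` satisfies `f(n) ≥ k`. -/
theorem stmt_2 (k : ℕ) (hk : 0 < k) (n : ℕ)
    (hn : k * ∏ p ∈ (Finset.range (2 * k + 1)).filter Nat.Prime, p ≤ n) :
    hasAP n k := by
  set P := ∏ p ∈ (Finset.range (2 * k + 1)).filter Nat.Prime, p with hP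
  have hdvd : ∀ p, p.Prime → p ≤ 2 * k → p ∣ P := fun p hp hle =>
    Finset.dvd_prod_of_mem (fun p => p) (by simp [hp]; omega)
  have hPpos : 0 < P := Finset.prod_pos fun p hp => (Finset.mem_filter.1 hp).2.pos
  have hP2 : 2 ≤ P := Nat.le_of_dvd hPpos (hdvd 2 Nat.prime_two (by omega))
  have hn0 : 0 < n := lt_of_lt_of_le (Nat.mul_pos hk hPpos) hn
  by_cases h : ∃ p, p.Prime ∧ p ∣ n ∧ 2 * k < p
  · obtain ⟨p, hp, hpn, hpk⟩ := h
    exact hasAP_of_large_prime hk hn0 hp hpn hpk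
  · push Not at h
    refine ⟨1, P, hPpos, fun i hi => ⟨by omega, by nlinarith, ?_⟩⟩
    refine Nat.Coprime.symm (Nat.coprime_of_dvd fun p hp hpn hd => ?_)
    rw [Nat.dvd_add_left ((hdvd p hp (h p hp hpn)).mul_left i)] at hd
    exact hp.one_lt.ne' (Nat.dvd_one.1 hd)
end

section
/- For every integer n > 1, with p the largest prime factor of n and P the radical of n (the product of the distinct prime factors of n), one has f(n) ≤ max{p - 1, n/P}; that is, every arithmetic progression contained in A(n) has length at most max{p - 1, n/P}. -/
lemma exists_dvd_add_mul {r d : ℕ} (a : ℕ) (hr : r.Prime) (h : ¬ r ∣ d) :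
    ∃ i < r, r ∣ a + i * d := by
  have : Fact r.Prime := ⟨hr⟩
  have hd : (d : ZMod r) ≠ 0 := by rwa [Ne, ZMod.natCast_eq_zero_iff]
  refine ⟨(-(a : ZMod r) / d).val, ZMod.val_lt _, ?_⟩
  rw [← ZMod.natCast_eq_zero_iff]
  push_cast
  rw [ZMod.natCast_zmod_val, div_mul_cancel₀ _ hd, add_neg_cancel]

/-- For `n > 1` with largest prime factor `p` and radical `P`,
every arithmetic progression contained in `A(n)` has length at most
`max (p - 1) (n / P)`; i.e. `f(n) ≤ max{p - 1, n/P}`. -/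
theorem stmt_3 (n p : ℕ) (hn : 1 < n) (hp : p.Prime) (hpn : p ∣ n)
    (hmax : ∀ q : ℕ, q.Prime → q ∣ n → q ≤ p) :
    ∀ s : ℕ, hasAP n s → s ≤ max (p - 1) (n / ∏ q ∈ n.primeFactors, q) := by
  rintro s ⟨a, d, hd, hA⟩
  rw [le_max_iff, or_iff_not_imp_left]
  intro hs
  have hps : p ≤ s := by omega
  have hdvd : ∀ r : ℕ, r.Prime → r ∣ n → r ∣ d := by
    intro r hr hrn
    by_contra h
    obtain ⟨i, hi, hri⟩ := exists_dvd_add_mul a hr h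
    have hg := (hA i (by have := hmax r hr hrn; omega)).2.2
    have h1 := Nat.dvd_gcd hri hrn
    rw [hg] at h1
    exact hr.one_lt.ne' (Nat.dvd_one.mp h1)
  have hPd : ∏ q ∈ n.primeFactors, q ∣ d :=
    Finset.prod_primes_dvd d (fun q hq => (Nat.prime_of_mem_primeFactors hq).prime)
      (fun q hq => hdvd q (Nat.prime_of_mem_primeFactors hq) (Nat.dvd_of_mem_primeFactors hq))
  have hPn : ∏ q ∈ n.primeFactors, q ∣ n := Nat.prod_primeFactors_dvd n
  have hPle := Nat.le_of_dvd hd hPd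
  set P := ∏ q ∈ n.primeFactors, q
  obtain ⟨m, hm⟩ := hPn
  have hP : 0 < P := Nat.pos_of_ne_zero (by rintro h; rw [h] at hm; omega)
  rw [hm, Nat.mul_div_cancel_left _ hP]
  have hs0 := hp.pos
  have hlast := (hA (s - 1) (by omega)).2.1
  have h2 : P * (s - 1) < P * m := by
    calc P * (s - 1) ≤ d * (s - 1) := Nat.mul_le_mul_right _ hPle
      _ = (s - 1) * d := mul_comm _ _
      _ ≤ a + (s - 1) * d := Nat.le_add_left _ _
      _ < n := hlast
      _ = P * m := hm
  have := Nat.lt_of_mul_lt_mul_left h2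
  omega
end

section
/- If n = p_1 p_2 ⋯ p_d is squarefree with d ≥ 2 distinct prime factors p_1 < p_2 < ⋯ < p_d, then A(n) contains an arithmetic progression of length at least (p_d - 1)/2 with common difference q = p_1 p_2 ⋯ p_{d-1}; in particular f(n) ≥ (p_d - 1)/2. -/
/-- A term `1 + k q` of the full progression lies in `A(p q)` as soon as `p` does not divide it. -/
lemma inA_one_add_mul {p q k : ℕ} (hp : p.Prime) (hq : 1 < q) (hk : k < p)
    (hdvd : ¬ p ∣ 1 + k * q) : inA (p * q) (1 + k * q) := by
  refine ⟨by omega, ?_, ?_⟩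
  · have : (k + 1) * q ≤ p * q := Nat.mul_le_mul_right q hk
    rw [Nat.add_mul] at this
    omega
  · have h1 : Nat.Coprime (1 + k * q) p := ((Nat.Prime.coprime_iff_not_dvd hp).2 hdvd).symm
    have h2 : Nat.Coprime (1 + k * q) q := by simp
    exact h1.mul_right h2

lemma index_unique {p q i j : ℕ} (hpq : Nat.Coprime p q) (hij : i < j) (hj : j < p)
    (hi : p ∣ 1 + i * q) : ¬ p ∣ 1 + j * q := by
  intro h
  have hsub : p ∣ (j - i) * q := by
    have := Nat.dvd_sub h hi
    rwa [Nat.add_sub_add_left, ← Nat.sub_mul] at this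
  have := Nat.le_of_dvd (by omega) (hpq.dvd_of_dvd_mul_right hsub)
  omega

lemma exists_progression {p q : ℕ} (hp : p.Prime) (hq : 1 < q) (hpq : Nat.Coprime p q) :
    ∃ a s : ℕ, 2 * s ≥ p - 1 ∧ ∀ i < s, inA (p * q) (a + i * q) := by
  by_cases hex : ∃ i₀ < p, p ∣ 1 + i₀ * q
  · obtain ⟨i₀, hi₀, hdvd⟩ := hex
    by_cases hlarge : p - 1 ≤ 2 * i₀
    · refine ⟨1, i₀, hlarge, fun i hi => ?_⟩
      exact inA_one_add_mul hp hq (hi.trans hi₀) fun h => index_unique hpq hi hi₀ h hdvd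
    · refine ⟨1 + (i₀ + 1) * q, p - 1 - i₀, by omega, fun i hi => ?_⟩
      rw [Nat.add_assoc, ← Nat.add_mul]
      exact inA_one_add_mul hp hq (by omega)
        (index_unique hpq (by omega) (by omega) hdvd)
  · push Not at hex
    exact ⟨1, p, by omega, fun i hi => inA_one_add_mul hp hq hi (hex i hi)⟩

/-- If `n` is squarefree with at least `2` prime factors and largest prime
factor `p`, then `A(n)` contains an AP of length `s` with `2s ≥ p - 1` whose
common difference is `q = n / p` (the product of the other prime factors);
in particular `f(n) ≥ (p - 1)/2`. -/
theorem stmt_6 (n p : ℕ) (hn : 1 < n) (hsf : Squarefree n)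
    (hd : 2 ≤ n.primeFactors.card) (hp : p.Prime) (hpn : p ∣ n)
    (hmax : ∀ q : ℕ, q.Prime → q ∣ n → q ≤ p) :
    ∃ a s : ℕ, 2 * s ≥ p - 1 ∧ (∀ i < s, inA n (a + i * (n / p))) ∧ hasAP n s := by
  obtain ⟨q, rfl⟩ := hpn
  have hpq : Nat.Coprime p q := Nat.coprime_of_squarefree_mul hsf
  have hq : 1 < q := by
    by_contra hle
    interval_cases q
    · simp at hn
    · simp [hp.primeFactors] at hd
  rw [Nat.mul_div_cancel_left q hp.pos]
  obtain ⟨a, s, hs, hA⟩ := exists_progression hp hq hpq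
  exact ⟨a, s, hs, hA, a, q, hq.le, hA⟩
end

section
/- For every integer n > 1, if a_0, a_0 + q, ..., a_0 + (s-1)q is an arithmetic progression contained in A(n) with common difference q ≥ rad(n), then s ≤ n/rad(n). -/
/-- For `n > 1`, any AP contained in `A(n)` whose common difference `q`
satisfies `q ≥ rad n` has length `s ≤ n / rad n`. -/
theorem stmt_9 (n a q s : ℕ) (hn : 1 < n)
    (hq : (∏ p ∈ n.primeFactors, p) ≤ q)
    (hAP : ∀ i < s, inA n (a + i * q)) :
    s ≤ n / ∏ p ∈ n.primeFactors, p := by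
  obtain ⟨m, hm⟩ := Nat.prod_primeFactors_dvd n
  have hr : 0 < ∏ p ∈ n.primeFactors, p := Nat.pos_of_ne_zero fun h => by
    rw [h, zero_mul] at hm
    omega
  generalize (∏ p ∈ n.primeFactors, p) = r at *
  have hdiv : n / r = m := by rw [hm, Nat.mul_div_cancel_left _ hr]
  rw [hdiv]
  by_contra! hs
  -- The term of index `m = n / r` is at least `a + m * r = a + n ≥ n`, so it is not in `A(n)`.
  obtain ⟨-, hlt, -⟩ := hAP m hs
  have hle : m * r ≤ m * q := Nat.mul_le_mul_left m hq
  rw [mul_comm m r, ← hm] at hle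
  omega
end

section
/- If n = p_1^{r_1} p_2^{r_2} ⋯ p_d^{r_d} with distinct primes p_1 < p_2 < ⋯ < p_d and positive integer exponents r_1, ..., r_d, then f(n) ≥ max{(p_d - 1)/2, n/(p_1 p_2 ⋯ p_d)} provided d ≥ 2; that is, A(n) contains both an arithmetic progression whose length s satisfies 2s ≥ p_d - 1 and an arithmetic progression of length p_1^{r_1 - 1} p_2^{r_2 - 1} ⋯ p_d^{r_d - 1}. -/
theorem coprime_one_add_mul_of_dvd {k i m : ℕ} (h : k ∣ m) : Nat.Coprime (1 + i * m) k := by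
  obtain ⟨c, rfl⟩ := h
  have : 1 + i * (k * c) = 1 + k * (i * c) := by ring
  rw [this]
  simp

/-- At most one index below `P` makes `1 + i * m` a multiple of `P`, as `m` is invertible
modulo `P`. -/
theorem index_eq_of_dvd {P m i j : ℕ} (hP : P.Prime) (hPm : ¬ P ∣ m) (hi : i < P) (hj : j < P)
    (h1 : P ∣ 1 + i * m) (h2 : P ∣ 1 + j * m) : i = j := by
  wlog hij : i ≤ j generalizing i j
  · exact (this hj hi h2 h1 (by omega)).symm
  have h3 : P ∣ (j - i) * m := by
    have h := Nat.dvd_sub h2 h1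
    rwa [Nat.add_sub_add_left, ← Nat.sub_mul] at h
  have h4 := Nat.eq_zero_of_dvd_of_lt ((hP.dvd_mul.1 h3).resolve_right hPm) (by omega)
  omega

/-- The witness is the longer of the two pieces into which the multiple of `P`, if there is one,
cuts the progression `1, 1 + m, …, 1 + (P - 1) * m`. -/
theorem exists_long_AP {n P m : ℕ} (hP : P.Prime) (hPm : ¬ P ∣ m) (hm : 1 ≤ m)
    (hA : ∀ i < P, ¬ P ∣ 1 + i * m → inA n (1 + i * m)) :
    ∃ s : ℕ, hasAP n s ∧ 2 * s ≥ P - 1 := by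
  by_cases h : ∃ j < P, P ∣ 1 + j * m
  · obtain ⟨j, hj, hdj⟩ := h
    by_cases hlong : 2 * j ≥ P - 1
    · refine ⟨j, ⟨1, m, hm, fun i hi => hA i (by omega) fun hd => ?_⟩, hlong⟩
      have := index_eq_of_dvd hP hPm (by omega) hj hd hdj
      omega
    · refine ⟨P - 1 - j, ⟨1 + (j + 1) * m, m, hm, fun i hi => ?_⟩, by omega⟩
      have he : 1 + (j + 1) * m + i * m = 1 + (j + 1 + i) * m := by ring
      rw [he]
      refine hA _ (by omega) fun hd => ?_
      have := index_eq_of_dvd hP hPm (by omega) hj hd hdj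
      omega
  · push Not at h
    exact ⟨P, ⟨1, m, hm, fun i hi => hA i hi (h i hi)⟩, by omega⟩

/-- If `n = p₁^{r₁} ⋯ p_d^{r_d}` with distinct primes `p₁ < ⋯ < p_d`,
positive exponents, and `d ≥ 2`, then `A(n)` contains an AP of length `s`
with `2s ≥ p_d - 1`, and an AP of length `p₁^{r₁-1} ⋯ p_d^{r_d-1}`;
i.e. `f(n) ≥ max{(p_d - 1)/2, n / (p₁ ⋯ p_d)}`. -/
theorem stmt_11 (d : ℕ) (hd : 2 ≤ d) (p r : Fin d → ℕ)
    (hp : ∀ i, (p i).Prime) (hmono : StrictMono p) (hr : ∀ i, 1 ≤ r i)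
    (n : ℕ) (hn : n = ∏ i, p i ^ r i) :
    (∃ s : ℕ, hasAP n s ∧ 2 * s ≥ p ⟨d - 1, by omega⟩ - 1) ∧
    hasAP n (∏ i, p i ^ (r i - 1)) := by
  set l : Fin d := ⟨d - 1, by omega⟩ with hl
  set m := ∏ i ∈ Finset.univ.erase l, p i with hm
  set s := ∏ i, p i ^ (r i - 1) with hs
  have hmP : m * p l = ∏ i, p i := Finset.prod_erase_mul _ _ (Finset.mem_univ l)
  have hn' : n = s * (m * p l) := by
    rw [hn, hs, hmP, ← Finset.prod_mul_distrib]
    exact Finset.prod_congr rfl fun i _ => (pow_sub_one_mul (by have := hr i; omega) _).symm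
  have hs1 : 1 ≤ s := Finset.prod_pos fun i _ => pow_pos (hp i).pos _
  have hmpos : 0 < m := Finset.prod_pos fun i _ => (hp i).pos
  have hm2 : 2 ≤ m := by
    have h0 : (⟨0, by omega⟩ : Fin d) ∈ Finset.univ.erase l := by
      simp [hl]; omega
    exact (hp _).two_le.trans (Nat.le_of_dvd hmpos (Finset.dvd_prod_of_mem p h0))
  have hPm : ¬ p l ∣ m := by
    intro h
    obtain ⟨i, hi, hdi⟩ := (hp l).prime.exists_mem_finset_dvd h
    have := hmono.injective ((Nat.prime_dvd_prime_iff_eq (hp l) (hp i)).1 hdi)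
    exact (Finset.mem_erase.1 hi).1 this.symm
  have hP2 := (hp l).two_le
  have hcop : ∀ a, (∀ i, Nat.Coprime a (p i)) → Nat.Coprime a n := fun a h => by
    rw [hn]
    exact Nat.Coprime.prod_right fun i _ => (h i).pow_right _
  constructor
  · refine exists_long_AP (hp l) hPm (by omega) fun i hi hdi => ⟨by omega, ?_, hcop _ fun k => ?_⟩
    · have h1 : (i + 1) * m ≤ p l * m := Nat.mul_le_mul_right _ hi
      have h2 : m * p l ≤ n := by rw [hn']; exact Nat.le_mul_of_pos_left _ hs1
      nlinarith
    · by_cases hk : k = l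
      · rw [hk]
        exact ((hp l).coprime_iff_not_dvd.2 hdi).symm
      · exact coprime_one_add_mul_of_dvd
          (Finset.dvd_prod_of_mem p (Finset.mem_erase.2 ⟨hk, Finset.mem_univ k⟩))
  · refine ⟨1, m * p l, by nlinarith, fun i hi => ⟨by omega, ?_, hcop _ fun k => ?_⟩⟩
    · have h1 : (i + 1) * (m * p l) ≤ s * (m * p l) := Nat.mul_le_mul_right _ hi
      rw [hn']
      nlinarith
    · rw [hmP]
      exact coprime_one_add_mul_of_dvd (Finset.dvd_prod_of_mem p (Finset.mem_univ k))
end
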